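/- Let P be a dcpo, M a dcpo-∨↑-semilattice, and f : P → M a Scott continuous function. Then there is a unique function f̃ : P^∨ → M that maps the least upper bound in P^∨ of every nonempty directed family to the supremum of its image, maps the least upper bound in P^∨ of every consistent pair to the supremum of its image, and satisfies f̃(↓x) = f(x) for all x ∈ P; moreover f̃(A) = sup f(A) for every A ∈ P^∨. -/

import Mathlib

/-!
The extension is `g A = sup (f '' A)`, which exists because `A` is ⋁-existing.

*`g` is a homomorphism.* If `𝒟` is a directed family or a consistent pair in `P^∨`, then the union
of `𝒟` is again ⋁-existing: its supremum under a Scott continuous map is the supremum of the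
suprema of the members of `𝒟`, which form a directed set or a consistent pair. A Scott continuous
map has the same upper bounds on a set as on its Scott closure, so the Scott closure of the union
lies in `P^∨` and is the supremum of `𝒟` there. Both facts together show that `P^∨` is a
dcpo-∨↑-semilattice (`isDcpoVSemilattice_pvee`) and that `g` preserves these suprema
(`isLUB_image_pvee`).

*Uniqueness.* The key lemma is `SupExisting.mem_of_isLUB`: if `A` is ⋁-existing, `h : P → L` is
Scott continuous, and `F ⊆ L` is a lower set containing `h '' A` and closed under directed suprema
and suprema of consistent pairs, then `sup (h '' A) ∈ F`. To see this, glue two copies of `L` along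
`F`. The result is a dcpo-∨↑-semilattice, in which `h '' A` (inside the common part) has a supremum.
If `sup (h '' A)` were outside `F`, its two copies would be upper bounds with no common lower
bound outside `F`, and the supremum would have to lie in `F` after all.
For a homomorphism `g'` extending `f`, apply this to `h = j` and `F = {B | g' B ≤ g A}`: since `A`
is the supremum of `j '' A`, it follows that `g' A ≤ g A`. The other inequality is monotonicity.
-/

universe u v

/-- A *dcpo*: a partial order in which every nonempty directed subset has a least upper bound. -/
def IsDcpo (P : Type*) [PartialOrder P] : Prop :=
  ∀ d : Set P, d.Nonempty → DirectedOn (· ≤ ·) d → ∃ a, IsLUB d a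

/-- A *dcpo-∨↑-semilattice*: a dcpo in which every consistent pair of elements
(i.e. pair with an upper bound) has a least upper bound. -/
def IsDcpoVSemilattice (L : Type*) [PartialOrder L] : Prop :=
  IsDcpo L ∧ ∀ x y : L, BddAbove ({x, y} : Set L) → ∃ a, IsLUB ({x, y} : Set L) a

/-- Scott continuity: `f` maps least upper bounds of nonempty directed sets to
least upper bounds of the images. -/
def IsScottContinuous {P : Type*} {L : Type*} [PartialOrder P] [PartialOrder L]
    (f : P → L) : Prop :=
  ∀ d : Set P, d.Nonempty → DirectedOn (· ≤ ·) d → ∀ a, IsLUB d a → IsLUB (f '' d) (f a)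

/-- A *Scott closed* set: a lower set closed under least upper bounds of its
nonempty directed subsets. -/
def IsScottClosed {P : Type*} [PartialOrder P] (A : Set P) : Prop :=
  IsLowerSet A ∧ ∀ d : Set P, d ⊆ A → d.Nonempty → DirectedOn (· ≤ ·) d →
    ∀ a, IsLUB d a → a ∈ A

/-- The Scott closure of a set: the smallest Scott closed set containing it. -/
def scottClosure {P : Type*} [PartialOrder P] (A : Set P) : Set P :=
  ⋂₀ {C | IsScottClosed C ∧ A ⊆ C}

/-- A subset `A` of a dcpo `P` is *⋁-existing* if for every Scott continuous map `f`
into an arbitrary dcpo-∨↑-semilattice `L`, the supremum of `f '' A` exists in `L`. -/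
def SupExisting {P : Type u} [PartialOrder P] (A : Set P) : Prop :=
  ∀ (L : Type v) [PartialOrder L], IsDcpoVSemilattice L →
    ∀ f : P → L, IsScottContinuous f → ∃ a, IsLUB (f '' A) a

/-- An *F-Scott closed* set: a Scott closed set containing the least upper bound of
each of its nonempty finite consistent subsets. -/
def IsFScottClosed {L : Type*} [PartialOrder L] (A : Set L) : Prop :=
  IsScottClosed A ∧ ∀ F : Set L, F ⊆ A → F.Nonempty → F.Finite → BddAbove F →
    ∀ a, IsLUB F a → a ∈ A

/-- The F-Scott closure of a set: the intersection of all F-Scott closed sets containing it. -/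
def fScottClosure {L : Type*} [PartialOrder L] (A : Set L) : Set L :=
  ⋂₀ {C | IsFScottClosed C ∧ A ⊆ C}

/-- A *dcpo-∨↑-semilattice homomorphism*: maps least upper bounds of nonempty directed
sets and of consistent pairs to the least upper bounds of the images. -/
def IsSemilatticeHom {L : Type*} {M : Type*} [PartialOrder L] [PartialOrder M]
    (f : L → M) : Prop :=
  (∀ d : Set L, d.Nonempty → DirectedOn (· ≤ ·) d → ∀ a, IsLUB d a → IsLUB (f '' d) (f a)) ∧
  (∀ x y : L, BddAbove ({x, y} : Set L) → ∀ a, IsLUB ({x, y} : Set L) a →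
    IsLUB (f '' ({x, y} : Set L)) (f a))

/-- A subset `A` of a dcpo-∨↑-semilattice `L` is *F-⋁-existing* if for every
dcpo-∨↑-semilattice homomorphism `f` into an arbitrary dcpo-∨↑-semilattice `M`,
the supremum of `f '' A` exists in `M`. -/
def FSupExisting {L : Type u} [PartialOrder L] (A : Set L) : Prop :=
  ∀ (M : Type v) [PartialOrder M], IsDcpoVSemilattice M →
    ∀ f : L → M, IsSemilatticeHom f → ∃ a, IsLUB (f '' A) a

/-- `P^∨`: the family of all ⋁-existing Scott closed subsets of `P`, ordered by inclusion. -/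
abbrev Pvee (P : Type u) [PartialOrder P] : Type u :=
  {A : Set P // IsScottClosed A ∧ SupExisting.{u, u} A}

theorem isScottClosed_principal {P : Type u} [PartialOrder P] (x : P) :
    IsScottClosed (Set.Iic x) := by
  constructor
  · intro a b hba ha
    exact le_trans hba ha
  · intro d hd _ _ a ha
    exact ha.2 fun y hy => hd hy

theorem supExisting_principal {P : Type u} [PartialOrder P] (x : P) :
    SupExisting.{u, v} (Set.Iic x) := by
  intro L _ _ f hf
  have hdir : DirectedOn (· ≤ ·) (Set.Iic x) := by
    intro a ha b hb
    exact ⟨x, le_refl x, ha, hb⟩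
  exact ⟨f x, hf (Set.Iic x) ⟨x, Set.mem_Iic.2 (le_refl x)⟩ hdir x isLUB_Iic⟩

/-- The embedding `j` of `P` into `P^∨`, sending `x` to the principal ideal `↓x`. -/
def jmap {P : Type u} [PartialOrder P] (x : P) : Pvee P :=
  ⟨Set.Iic x, isScottClosed_principal x, supExisting_principal.{u, u} x⟩

/-! ### Scott closure and Scott continuous maps -/

theorem monotone_of_directed_lub {P : Type*} {L : Type*} [PartialOrder P] [PartialOrder L]
    {f : P → L} (hf : IsScottContinuous f) : Monotone f := by
  intro x y hxy
  have h := hf {x, y} ⟨x, by simp⟩ ?_ y ?_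
  · exact h.1 ⟨x, by simp, rfl⟩
  · rintro a ha b hb
    refine ⟨y, by simp, ?_, ?_⟩
    · rcases ha with rfl | rfl
      exacts [hxy, le_rfl]
    · rcases hb with rfl | rfl
      exacts [hxy, le_rfl]
  · refine ⟨?_, fun u hu => hu (by simp)⟩
    rintro a (rfl | rfl)
    exacts [hxy, le_rfl]

theorem subset_scottClosure {P : Type*} [PartialOrder P] (A : Set P) : A ⊆ scottClosure A :=
  fun _ hx _ hC => hC.2 hx

theorem scottClosure_subset {P : Type*} [PartialOrder P] {A C : Set P} (hC : IsScottClosed C)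
    (h : A ⊆ C) : scottClosure A ⊆ C :=
  fun _ hx => hx C ⟨hC, h⟩

theorem isScottClosed_scottClosure {P : Type*} [PartialOrder P] (A : Set P) :
    IsScottClosed (scottClosure A) := by
  constructor
  · intro a b hba ha C hC
    exact hC.1.1 hba (ha C hC)
  · intro d hd hne hdir a ha C hC
    exact hC.1.2 d (fun x hx => hd hx C hC) hne hdir a ha

theorem isScottClosed_preimage_Iic {P : Type*} {L : Type*} [PartialOrder P] [PartialOrder L]
    {f : P → L} (hf : IsScottContinuous f) (m : L) : IsScottClosed {x | f x ≤ m} := by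
  constructor
  · intro a b hba ha
    exact (monotone_of_directed_lub hf hba).trans ha
  · intro d hd hne hdir a ha
    refine (hf d hne hdir a ha).2 ?_
    rintro _ ⟨x, hx, rfl⟩
    exact hd hx

theorem isLUB_image_scottClosure {P : Type*} {L : Type*} [PartialOrder P] [PartialOrder L]
    {f : P → L} (hf : IsScottContinuous f) {A : Set P} {a : L} (h : IsLUB (f '' A) a) :
    IsLUB (f '' scottClosure A) a := by
  constructor
  · rintro _ ⟨x, hx, rfl⟩
    exact scottClosure_subset (isScottClosed_preimage_Iic hf a)
      (fun y hy => h.1 ⟨y, hy, rfl⟩) hx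
  · intro u hu
    refine h.2 ?_
    rintro _ ⟨x, hx, rfl⟩
    exact hu ⟨x, subset_scottClosure A hx, rfl⟩

/-! ### Suprema in `P^∨` -/

/-- The union of a family of elements of `P^∨`, as a subset of `P`. -/
def pveeUnion {P : Type u} [PartialOrder P] (D : Set (Pvee P)) : Set P :=
  {x | ∃ B ∈ D, x ∈ B.1}

theorem isLUB_image_pveeUnion {P L : Type u} [PartialOrder P] [PartialOrder L]
    {f : P → L} {D : Set (Pvee P)} {k : Pvee P → L} (hk : ∀ B, IsLUB (f '' B.1) (k B)) {a : L}
    (ha : IsLUB (k '' D) a) : IsLUB (f '' pveeUnion D) a := by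
  constructor
  · rintro _ ⟨x, ⟨B, hB, hx⟩, rfl⟩
    exact ((hk B).1 ⟨x, hx, rfl⟩).trans (ha.1 ⟨B, hB, rfl⟩)
  · intro u hu
    refine ha.2 ?_
    rintro _ ⟨B, hB, rfl⟩
    refine (hk B).2 ?_
    rintro _ ⟨x, hx, rfl⟩
    exact hu ⟨x, ⟨B, hB, hx⟩, rfl⟩

theorem monotone_of_isLUB_image {P L : Type u} [PartialOrder P] [PartialOrder L]
    {f : P → L} {k : Pvee P → L} (hk : ∀ B, IsLUB (f '' B.1) (k B)) : Monotone k := by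
  intro B C hBC
  exact (hk B).mono (hk C) (Set.image_mono hBC)

theorem supExisting_pveeUnion_directed {P : Type u} [PartialOrder P] {D : Set (Pvee P)}
    (hne : D.Nonempty) (hdir : DirectedOn (· ≤ ·) D) : SupExisting.{u, u} (pveeUnion D) := by
  intro L _ hL f hf
  choose k hk using fun B : Pvee P => B.2.2 L hL f hf
  have hmono := monotone_of_isLUB_image hk
  obtain ⟨a, ha⟩ := hL.1 (k '' D) (hne.image k) (by
    rintro _ ⟨B, hB, rfl⟩ _ ⟨C, hC, rfl⟩
    obtain ⟨E, hE, hBE, hCE⟩ := hdir B hB C hC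
    exact ⟨k E, ⟨E, hE, rfl⟩, hmono hBE, hmono hCE⟩)
  exact ⟨a, isLUB_image_pveeUnion hk ha⟩

theorem supExisting_pveeUnion_pair {P : Type u} [PartialOrder P] {X Y : Pvee P}
    (hb : BddAbove {X, Y}) : SupExisting.{u, u} (pveeUnion {X, Y}) := by
  intro L _ hL f hf
  choose k hk using fun B : Pvee P => B.2.2 L hL f hf
  have hmono := monotone_of_isLUB_image hk
  obtain ⟨a, ha⟩ := hL.2 (k X) (k Y) (by
    rw [← Set.image_pair]
    exact hmono.map_bddAbove hb)
  rw [← Set.image_pair] at ha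
  exact ⟨a, isLUB_image_pveeUnion hk ha⟩

/-- The Scott closure of a ⋁-existing union of elements of `P^∨`, as an element of `P^∨`. -/
def pveeSup {P : Type u} [PartialOrder P] (D : Set (Pvee P))
    (h : SupExisting.{u, u} (pveeUnion D)) : Pvee P :=
  ⟨scottClosure (pveeUnion D), isScottClosed_scottClosure _, fun L _ hL f hf =>
    (h L hL f hf).imp fun _ ha => isLUB_image_scottClosure hf ha⟩

theorem isLUB_pveeSup {P : Type u} [PartialOrder P] (D : Set (Pvee P))
    (h : SupExisting.{u, u} (pveeUnion D)) : IsLUB D (pveeSup D h) := by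
  constructor
  · intro B hB x hx
    exact subset_scottClosure _ ⟨B, hB, hx⟩
  · intro C hC
    refine scottClosure_subset C.2.1 ?_
    rintro x ⟨B, hB, hx⟩
    exact hC hB hx

theorem isDcpoVSemilattice_pvee (P : Type u) [PartialOrder P] : IsDcpoVSemilattice (Pvee P) :=
  ⟨fun D hne hdir => ⟨_, isLUB_pveeSup D (supExisting_pveeUnion_directed hne hdir)⟩,
    fun _ _ hb => ⟨_, isLUB_pveeSup _ (supExisting_pveeUnion_pair hb)⟩⟩

/-- The map `A ↦ sup (f '' A)` preserves the supremum of any family in `P^∨` whose union is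
⋁-existing, because that supremum is the Scott closure of the union. -/
theorem isLUB_image_pvee {P L : Type u} [PartialOrder P] [PartialOrder L]
    {f : P → L} (hf : IsScottContinuous f) {k : Pvee P → L}
    (hk : ∀ B, IsLUB (f '' B.1) (k B)) {D : Set (Pvee P)}
    (h : SupExisting.{u, u} (pveeUnion D)) {A : Pvee P} (hA : IsLUB D A) :
    IsLUB (k '' D) (k A) := by
  obtain rfl := hA.unique (isLUB_pveeSup D h)
  constructor
  · rintro _ ⟨B, hB, rfl⟩
    exact monotone_of_isLUB_image hk (hA.1 hB)
  · intro u hu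
    refine (hk _).2 ?_
    rintro _ ⟨x, hx, rfl⟩
    refine scottClosure_subset (isScottClosed_preimage_Iic hf u) ?_ hx
    rintro y ⟨B, hB, hy⟩
    exact ((hk B).1 ⟨y, hy, rfl⟩).trans (hu ⟨B, hB, rfl⟩)

theorem isScottContinuous_jmap {P : Type u} [PartialOrder P] :
    IsScottContinuous (jmap : P → Pvee P) := by
  intro d hne hdir a ha
  constructor
  · rintro _ ⟨x, hx, rfl⟩ y hy
    exact le_trans hy (ha.1 hx)
  · intro C hC y hy
    refine C.2.1.1 hy (C.2.1.2 d (fun x hx => ?_) hne hdir a ha)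
    exact hC ⟨x, hx, rfl⟩ (le_refl x)

theorem isLUB_jmap_image {P : Type u} [PartialOrder P] (A : Pvee P) :
    IsLUB (jmap '' A.1) A := by
  constructor
  · rintro _ ⟨x, hx, rfl⟩ y hy
    exact A.2.1.1 hy hx
  · intro C hC x hx
    exact hC ⟨x, hx, rfl⟩ (le_refl x)

/-! ### Doubling along a closed subset -/

/-- Two copies of `L` glued along the subset `F`. An element is a point of `L` with two flags, under
the product order (implication on flags): both flags are false on `F`, and outside `F` exactly one
flag is true and records the copy. -/
abbrev Doubled {L : Type u} (F : Set L) : Type u :=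
  {x : L × Prop × Prop // ¬ (x.2.1 ∧ x.2.2) ∧ (x.2.1 ∨ x.2.2 ↔ x.1 ∉ F)}

/-- A subset of the doubled poset that does not meet both copies outside `F` has a supremum,
computed in `L`, provided that `F` is closed under this particular supremum. -/
theorem Doubled.exists_isLUB {L : Type u} [PartialOrder L] {F : Set L} (hF : IsLowerSet F)
    (S : Set (Doubled F)) {a : L} (ha : IsLUB ((fun x => x.1.1) '' S) a)
    (hnot : ¬ ((∃ x ∈ S, x.1.2.1) ∧ ∃ x ∈ S, x.1.2.2))
    (hclosed : (∀ x ∈ S, x.1.1 ∈ F) → a ∈ F) : ∃ s, IsLUB S s := by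
  refine ⟨⟨(a, (∃ x ∈ S, x.1.2.1), ∃ x ∈ S, x.1.2.2), hnot, ?_, ?_⟩, ?_, ?_⟩
  · rintro (⟨x, hx, h⟩ | ⟨x, hx, h⟩) haF
    · exact x.2.2.1 (Or.inl h) (hF (ha.1 ⟨x, hx, rfl⟩) haF)
    · exact x.2.2.1 (Or.inr h) (hF (ha.1 ⟨x, hx, rfl⟩) haF)
  · intro haF
    by_contra hcon
    refine haF (hclosed fun x hx => ?_)
    by_contra hxF
    rcases x.2.2.2 hxF with h | h
    · exact hcon (Or.inl ⟨x, hx, h⟩)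
    · exact hcon (Or.inr ⟨x, hx, h⟩)
  · intro x hx
    exact ⟨ha.1 ⟨x, hx, rfl⟩, fun h => ⟨x, hx, h⟩, fun h => ⟨x, hx, h⟩⟩
  · intro u hu
    refine ⟨ha.2 ?_, ?_, ?_⟩
    · rintro _ ⟨x, hx, rfl⟩
      exact (hu hx).1
    · rintro ⟨x, hx, h⟩
      exact (hu hx).2.1 h
    · rintro ⟨x, hx, h⟩
      exact (hu hx).2.2 h

theorem isDcpoVSemilattice_doubled {L : Type u} [PartialOrder L] (hL : IsDcpoVSemilattice L)
    {F : Set L} (hF : IsScottClosed F)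
    (hF2 : ∀ x y, x ∈ F → y ∈ F → ∀ a, IsLUB {x, y} a → a ∈ F) :
    IsDcpoVSemilattice (Doubled F) := by
  constructor
  · intro S hne hdir
    have hdir' : DirectedOn (· ≤ ·) ((fun x : Doubled F => x.1.1) '' S) := by
      rintro _ ⟨x, hx, rfl⟩ _ ⟨y, hy, rfl⟩
      obtain ⟨z, hz, hxz, hyz⟩ := hdir x hx y hy
      exact ⟨_, ⟨z, hz, rfl⟩, hxz.1, hyz.1⟩
    obtain ⟨a, ha⟩ := hL.1 _ (hne.image _) hdir'
    refine Doubled.exists_isLUB hF.1 S ha ?_ ?_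
    · rintro ⟨⟨x, hx, h1⟩, y, hy, h2⟩
      obtain ⟨z, hz, hxz, hyz⟩ := hdir x hx y hy
      exact z.2.1 ⟨hxz.2.1 h1, hyz.2.2 h2⟩
    · intro h
      refine hF.2 _ ?_ (hne.image _) hdir' a ha
      rintro _ ⟨x, hx, rfl⟩
      exact h x hx
  · rintro x y ⟨z, hz⟩
    obtain ⟨a, ha⟩ := hL.2 x.1.1 y.1.1 ⟨z.1.1, by
      rintro _ (rfl | rfl)
      · exact (hz (Set.mem_insert x {y})).1
      · exact (hz (Set.mem_insert_of_mem x (Set.mem_singleton y))).1⟩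
    refine Doubled.exists_isLUB hF.1 {x, y} (a := a) (by rwa [Set.image_pair]) ?_ ?_
    · rintro ⟨⟨v, hv, h1⟩, w, hw, h2⟩
      exact z.2.1 ⟨(hz hv).2.1 h1, (hz hw).2.2 h2⟩
    · intro h
      exact hF2 _ _ (h x (by simp)) (h y (by simp)) a ha

/-- The supremum of the image of a ⋁-existing set stays inside every Scott closed set that contains
the image and is closed under suprema of consistent pairs. Otherwise, in the doubling of `L` along
`F`, the image would have two upper bounds (the two copies of `a`) separating `a` from any least
one. -/
theorem SupExisting.mem_of_isLUB {P L : Type u} [PartialOrder P] [PartialOrder L]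
    {A : Set P} (hA : SupExisting.{u, u} A) (hL : IsDcpoVSemilattice L) {h : P → L}
    (hh : IsScottContinuous h) {F : Set L} (hF : IsScottClosed F)
    (hF2 : ∀ x y, x ∈ F → y ∈ F → ∀ a, IsLUB {x, y} a → a ∈ F)
    (hAF : ∀ x ∈ A, h x ∈ F) {a : L} (ha : IsLUB (h '' A) a) : a ∈ F := by
  have hmono := monotone_of_directed_lub hh
  -- `h` followed by the inclusion of the first copy of `L`
  let h' : P → Doubled F := fun x => ⟨(h x, h x ∉ F, False), by simp, by simp⟩
  have hh' : IsScottContinuous h' := by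
    intro d hne hdir b hb
    have hhb := hh d hne hdir b hb
    constructor
    · rintro _ ⟨x, hx, rfl⟩
      exact ⟨hhb.1 ⟨x, hx, rfl⟩, fun hx' hbF => hx' (hF.1 (hhb.1 ⟨x, hx, rfl⟩) hbF), id⟩
    · intro u hu
      refine ⟨hhb.2 ?_, fun hbF => ?_, False.elim⟩
      · rintro _ ⟨x, hx, rfl⟩
        exact (hu ⟨x, hx, rfl⟩).1
      · by_contra hup
        refine hbF (hF.2 (h '' d) ?_ (hne.image h) ?_ _ hhb)
        · rintro _ ⟨x, hx, rfl⟩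
          by_contra hxF
          exact hup ((hu ⟨x, hx, rfl⟩).2.1 hxF)
        · rintro _ ⟨x, hx, rfl⟩ _ ⟨y, hy, rfl⟩
          obtain ⟨z, hz, hxz, hyz⟩ := hdir x hx y hy
          exact ⟨_, ⟨z, hz, rfl⟩, hmono hxz, hmono hyz⟩
  obtain ⟨s, hs⟩ := hA _ (isDcpoVSemilattice_doubled hL hF hF2) h' hh'
  have h1 : s ≤ ⟨(a, a ∉ F, False), by simp, by simp⟩ := by
    refine hs.2 ?_
    rintro _ ⟨x, hx, rfl⟩
    exact ⟨ha.1 ⟨x, hx, rfl⟩, fun hxF => (hxF (hAF x hx)).elim, id⟩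
  have h2 : s ≤ ⟨(a, False, a ∉ F), by simp, by simp⟩ := by
    refine hs.2 ?_
    rintro _ ⟨x, hx, rfl⟩
    exact ⟨ha.1 ⟨x, hx, rfl⟩, fun hxF => (hxF (hAF x hx)).elim, False.elim⟩
  have hsF : s.1.1 ∈ F := by
    by_contra hsF
    rcases s.2.2.2 hsF with h | h
    · exact h2.2.1 h
    · exact h1.2.2 h
  refine hF.1 (ha.2 ?_) hsF
  rintro _ ⟨x, hx, rfl⟩
  exact (hs.1 ⟨x, hx, rfl⟩).1

/-! ### The universal property -/

/-- Universal property of `P^∨`: every Scott continuous `f : P → M` into a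
dcpo-∨↑-semilattice extends uniquely to a dcpo-∨↑-semilattice homomorphism
`g : P^∨ → M` with `g ∘ j = f`; moreover `g A = sup (f '' A)` for every `A ∈ P^∨`. -/
theorem pvee_universal_property {P : Type u} {M : Type u} [PartialOrder P] [PartialOrder M]
    (hP : IsDcpo P) (hM : IsDcpoVSemilattice M) (f : P → M) (hf : IsScottContinuous f) :
    ∃ g : Pvee P → M,
      IsSemilatticeHom g ∧ (∀ x : P, g (jmap x) = f x) ∧
      (∀ A : Pvee P, IsLUB (f '' A.1) (g A)) ∧
      ∀ g' : Pvee P → M, IsSemilatticeHom g' → (∀ x : P, g' (jmap x) = f x) → g' = g := by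
  choose g hg using fun A : Pvee P => A.2.2 M hM f hf
  refine ⟨g, ⟨fun D hne hdir A hA => ?_, fun X Y hb A hA => ?_⟩, fun x => ?_, hg,
    fun g' hg' hj => ?_⟩
  · exact isLUB_image_pvee hf hg (supExisting_pveeUnion_directed hne hdir) hA
  · exact isLUB_image_pvee hf hg (supExisting_pveeUnion_pair hb) hA
  · refine (hg (jmap x)).unique ⟨?_, fun u hu => hu ⟨x, le_refl x, rfl⟩⟩
    rintro _ ⟨y, hy, rfl⟩
    exact monotone_of_directed_lub hf hy
  · have hsc : IsScottContinuous g' := hg'.1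
    funext A
    apply le_antisymm
    · refine A.2.2.mem_of_isLUB (isDcpoVSemilattice_pvee P) isScottContinuous_jmap
        (F := {B | g' B ≤ g A}) (isScottClosed_preimage_Iic hsc _) ?_ ?_ (isLUB_jmap_image A)
      · intro X Y hX hY B hB
        refine (hg'.2 X Y ⟨B, hB.1⟩ B hB).2 ?_
        rintro _ ⟨Z, rfl | rfl, rfl⟩
        exacts [hX, hY]
      · intro x hx
        exact (hj x).le.trans ((hg A).1 ⟨x, hx, rfl⟩)
    · refine (hg A).2 ?_
      rintro _ ⟨x, hx, rfl⟩
      rw [← hj x]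
      exact monotone_of_directed_lub hsc ((isLUB_jmap_image A).1 ⟨x, hx, rfl⟩)
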